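/- Let n ≥ 1 and E = EuclideanSpace ℝ (Fin (n+1)). Let x, y ∈ E with x ≠ y such that the line {y + t • (x − y) : t ∈ ℝ} through x and y is disjoint from the closed unit ball centered at the origin. Let μ be the (n−1)-dimensional Hausdorff measure restricted to Z(y) = {σ ∈ E : ‖σ‖ = 1 ∧ ⟪y, σ⟫ = 1}. Then the real part of i^n · ∫_{Z(y)} ‖y − σ‖^{−1} (⟪x − y, σ⟫ − iε)^{−n} dμ(σ) tends to 0 as ε → 0⁺; i.e. Tendsto (fun ε : ℝ => (Complex.I ^ n * ∫ σ in Z(y), (‖y − σ‖⁻¹ : ℂ) * ((⟪x − y, σ⟫ : ℂ) − ε * Complex.I) ^ (−(n : ℤ)) ∂μ).re) (𝓝[>] 0) (𝓝 0). -/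

import Mathlib

open scoped InnerProductSpace
open MeasureTheory Filter Topology

lemma aux_norm (p ε : ℝ) (hε : 0 < ε) : ε ≤ ‖(p : ℂ) - ε * Complex.I‖ := by
  have := Complex.abs_im_le_norm ((p : ℂ) - ε * Complex.I)
  simpa [abs_of_pos hε] using this

lemma aux_ne (p ε : ℝ) (hε : 0 < ε) : (p : ℂ) - ε * Complex.I ≠ 0 := by
  rw [← norm_pos_iff]; exact hε.trans_le (aux_norm p ε hε)

lemma aux_inv (p ε δ : ℝ) (hδ : 0 < δ) (h : δ ≤ ε) (k : ℕ) :
    ‖((p : ℂ) - ε * Complex.I)⁻¹ ^ k‖ ≤ δ⁻¹ ^ k := by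
  rw [norm_pow, norm_inv]
  gcongr
  exact h.trans (aux_norm p ε (hδ.trans_le h))

lemma aux_meas {α : Type*} [MeasurableSpace α] {φ : α → ℝ} (hφ : Measurable φ) (c : ℂ) (k : ℕ) :
    Measurable (fun σ => ((φ σ : ℂ) - c)⁻¹ ^ k) := by
  fun_prop

lemma aux_integrable {α : Type*} [MeasurableSpace α] (μ : Measure α) [IsFiniteMeasure μ]
    {φ : α → ℝ} (hφ : Measurable φ) (ε : ℝ) (hε : 0 < ε) (k : ℕ) :
    Integrable (fun σ => ((φ σ : ℂ) - ε * Complex.I)⁻¹ ^ k) μ :=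
  Integrable.of_bound (aux_meas hφ _ k).aestronglyMeasurable (ε⁻¹ ^ k)
    (Eventually.of_forall fun _ => aux_inv _ _ _ hε le_rfl k)

lemma aux_hasDeriv (p ε : ℝ) (hε : 0 < ε) (k : ℕ) :
    HasDerivAt (fun ε : ℝ => ((p : ℂ) - ε * Complex.I)⁻¹ ^ k)
      (k * Complex.I * ((p : ℂ) - ε * Complex.I)⁻¹ ^ (k + 1)) ε := by
  have h1 : HasDerivAt (fun ε : ℝ => (p : ℂ) - ε * Complex.I) (-Complex.I) ε := by
    have := ((Complex.ofRealCLM.hasDerivAt (x := ε)).mul_const Complex.I).const_sub (p : ℂ)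
    simpa using this
  have h0 := aux_ne p ε hε
  have h2 : HasDerivAt (fun ε : ℝ => ((p : ℂ) - ε * Complex.I)⁻¹ ^ k) _ ε := (h1.inv h0).pow k
  refine h2.congr_deriv ?_
  change k * ((p : ℂ) - ε * Complex.I)⁻¹ ^ (k - 1) * (- -Complex.I / ((p : ℂ) - ε * Complex.I) ^ 2) = _
  rcases k with _ | k
  · simp
  · simp only [Nat.add_sub_cancel]
    simp only [div_eq_mul_inv, ← inv_pow]
    ring

lemma derivG {α : Type*} [MeasurableSpace α] (μ : Measure α) [IsFiniteMeasure μ]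
    {φ : α → ℝ} (hφ : Measurable φ) (ε : ℝ) (hε : 0 < ε) (k : ℕ) :
    HasDerivAt (fun ε : ℝ => ∫ σ, ((φ σ : ℂ) - ε * Complex.I)⁻¹ ^ k ∂μ)
      (k * Complex.I * ∫ σ, ((φ σ : ℂ) - ε * Complex.I)⁻¹ ^ (k + 1) ∂μ) ε := by
  rw [← integral_const_mul]
  refine (hasDerivAt_integral_of_dominated_loc_of_deriv_le (μ := μ)
    (F := fun (ε : ℝ) σ => ((φ σ : ℂ) - ε * Complex.I)⁻¹ ^ k)
    (F' := fun (ε : ℝ) σ => k * Complex.I * ((φ σ : ℂ) - ε * Complex.I)⁻¹ ^ (k + 1))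
    (bound := fun _ => k * (ε / 2)⁻¹ ^ (k + 1)) (s := Set.Ioi (ε / 2))
    (Ioi_mem_nhds (by linarith)) ?_ ?_ ?_ ?_ ?_ ?_).2
  · exact Eventually.of_forall fun x => (aux_meas hφ _ k).aestronglyMeasurable
  · exact aux_integrable μ hφ ε hε k
  · exact ((aux_meas hφ _ (k + 1)).const_mul _).aestronglyMeasurable
  · refine Eventually.of_forall fun σ x hx => ?_
    rw [norm_mul]
    have := aux_inv (φ σ) x (ε / 2) (by positivity) (le_of_lt hx) (k + 1)
    simp only [norm_mul, Complex.norm_natCast, Complex.norm_I, mul_one]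
    gcongr
  · exact integrable_const _
  · refine Eventually.of_forall fun σ x hx => ?_
    exact aux_hasDeriv _ _ (lt_trans (by positivity) hx) k

lemma limG {α : Type*} [MeasurableSpace α] (μ : Measure α) [IsFiniteMeasure μ]
    {φ : α → ℝ} (hφ : Measurable φ) (k : ℕ) :
    Tendsto (fun ε : ℝ => (ε : ℂ) ^ k * ∫ σ, ((φ σ : ℂ) - ε * Complex.I)⁻¹ ^ k ∂μ) atTop
      (𝓝 (Complex.I ^ k * (μ.real Set.univ : ℂ))) := by
  have h : Tendsto (fun ε : ℝ => ∫ σ, (ε : ℂ) ^ k * ((φ σ : ℂ) - ε * Complex.I)⁻¹ ^ k ∂μ) atTop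
      (𝓝 (∫ σ, Complex.I ^ k ∂μ)) := by
    refine tendsto_integral_filter_of_dominated_convergence (fun _ => (1:ℝ)) ?_ ?_ ?_ ?_
    · exact Eventually.of_forall fun x => ((aux_meas hφ _ k).const_mul _).aestronglyMeasurable
    · filter_upwards [eventually_gt_atTop 0] with x hx
      refine Eventually.of_forall fun σ => ?_
      have := aux_inv (φ σ) x x hx le_rfl k
      rw [norm_mul, norm_pow, Complex.norm_real, Real.norm_of_nonneg hx.le]
      calc x ^ k * _ ≤ x ^ k * x⁻¹ ^ k := by gcongr
        _ = 1 := by rw [← mul_pow, mul_inv_cancel₀ hx.ne', one_pow]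
    · exact integrable_const _
    · refine Eventually.of_forall fun σ => ?_
      have h1 : Tendsto (fun ε : ℝ => ((φ σ : ℂ) * ((ε⁻¹ : ℝ) : ℂ) - Complex.I)⁻¹ ^ k) atTop
          (𝓝 (((φ σ : ℂ) * ((0 : ℝ) : ℂ) - Complex.I)⁻¹ ^ k)) := by
        refine (Tendsto.inv₀ ?_ ?_).pow k
        · exact (((Complex.continuous_ofReal.tendsto 0).comp tendsto_inv_atTop_zero).const_mul
            _).sub_const _
        · simp
      have h2 : ((φ σ : ℂ) * ((0 : ℝ) : ℂ) - Complex.I)⁻¹ ^ k = Complex.I ^ k := by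
        simp [Complex.inv_I]
      rw [h2] at h1
      refine h1.congr' ?_
      filter_upwards [eventually_gt_atTop 0] with x hx
      rw [← mul_pow]
      congr 1
      have h0 := aux_ne (φ σ) x hx
      have hx' : (x : ℂ) ≠ 0 := by exact_mod_cast hx.ne'
      have h3 : (φ σ : ℂ) * ((x⁻¹ : ℝ) : ℂ) - Complex.I
         = (x : ℂ)⁻¹ * ((φ σ : ℂ) - x * Complex.I) := by
        push_cast
        field_simp
      rw [h3, mul_inv, inv_inv]
  simp only [integral_const_mul] at h
  simpa [mul_comm, Algebra.smul_def] using h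

lemma re_tendsto {l : Filter ℝ} {w : ℝ → ℂ} {c : ℝ} (hc : 0 ≤ c)
    (h : Tendsto (fun ε => w ε ^ 2) l (𝓝 (-(c : ℂ)))) : Tendsto (fun ε => (w ε).re) l (𝓝 0) := by
  have h1 : Tendsto (fun ε => √((‖w ε ^ 2‖ + (w ε ^ 2).re) / 2)) l
      (𝓝 (√((‖-(c:ℂ)‖ + (-(c:ℂ)).re) / 2))) :=
    (((h.norm).add ((Complex.continuous_re.tendsto _).comp h)).div_const 2).sqrt
  simp only [norm_neg, Complex.norm_real, Real.norm_of_nonneg hc, Complex.neg_re,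
    Complex.ofReal_re, add_neg_cancel, zero_div, Real.sqrt_zero] at h1
  rw [tendsto_zero_iff_abs_tendsto_zero]
  refine h1.congr fun ε => ?_
  simp only [Function.comp]
  rw [← Real.sqrt_sq_eq_abs]
  congr 1
  rw [norm_pow, Complex.sq_norm, Complex.normSq_apply, pow_two (w ε), Complex.mul_re]
  ring

lemma lemA {α : Type*} [MeasurableSpace α] (μ : Measure α) [IsFiniteMeasure μ]
    {φ : α → ℝ} (hφ : Measurable φ) (k : ℕ) (a R : ℝ) (haR : a ^ 2 < R ^ 2)
    (H : ∀ ε : ℝ, 0 < ε → ((a : ℂ) - ε * Complex.I) * ∫ σ, ((φ σ : ℂ) - ε * Complex.I)⁻¹ ^ k ∂μ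
      = (((a : ℂ) - ε * Complex.I) ^ 2 - (R : ℂ) ^ 2) *
        ∫ σ, ((φ σ : ℂ) - ε * Complex.I)⁻¹ ^ (k + 1) ∂μ) :
    Tendsto (fun ε : ℝ => (Complex.I ^ (k + 1) *
      ∫ σ, ((φ σ : ℂ) - ε * Complex.I)⁻¹ ^ (k + 1) ∂μ).re) (𝓝[>] 0) (𝓝 0) := by
  set G : ℝ → ℂ := fun ε => ∫ σ, ((φ σ : ℂ) - ε * Complex.I)⁻¹ ^ k ∂μ with hG
  set F : ℝ → ℂ := fun ε => ∫ σ, ((φ σ : ℂ) - ε * Complex.I)⁻¹ ^ (k + 1) ∂μ with hF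
  set z : ℝ → ℂ := fun ε => (a : ℂ) - ε * Complex.I with hz
  set M : ℝ := μ.real Set.univ
  have hzd : ∀ ε, HasDerivAt z (-Complex.I) ε := fun ε => by
    have := ((Complex.ofRealCLM.hasDerivAt (x := ε)).mul_const Complex.I).const_sub (a : ℂ)
    simpa using this
  set P : ℝ → ℂ := fun ε => G ε ^ 2 * (z ε ^ 2 - (R : ℂ) ^ 2) ^ k with hP
  have hPd : ∀ ε : ℝ, 0 < ε → HasDerivAt P 0 ε := by
    intro ε hε
    have h1 := ((derivG μ hφ ε hε k).pow 2).mul ((((hzd ε).pow 2).sub_const ((R : ℂ) ^ 2)).pow k)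
    refine HasDerivAt.congr_deriv (f := P) h1 ?_
    have H' : z ε * G ε = (z ε ^ 2 - (R : ℂ) ^ 2) * F ε := H ε hε
    change (2:ℕ) * G ε ^ (2 - 1) * (k * Complex.I * F ε) * (z ε ^ 2 - (R : ℂ) ^ 2) ^ k +
      G ε ^ 2 * (k * (z ε ^ 2 - (R : ℂ) ^ 2) ^ (k - 1) * ((2:ℕ) * z ε ^ (2 - 1) * -Complex.I)) = (0:ℂ)
    rcases k with _ | k
    · simp
    · simp only [Nat.add_sub_cancel, pow_succ _ k]
      push_cast
      simp only [pow_one]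
      linear_combination (-2 * G ε * ((k:ℂ) + 1) * Complex.I * (z ε ^ 2 - (R : ℂ) ^ 2) ^ k) * H'
  have hPlim : Tendsto P atTop (𝓝 ((M : ℂ) ^ 2)) := by
    have h1 : Tendsto (fun ε : ℝ => ((ε : ℂ) ^ k * G ε) ^ 2 *
        (((a : ℂ) * ((ε⁻¹ : ℝ) : ℂ) - Complex.I) ^ 2 - (R : ℂ) ^ 2 * ((ε⁻¹ : ℝ) : ℂ) ^ 2) ^ k) atTop
        (𝓝 ((Complex.I ^ k * (M : ℂ)) ^ 2 *
        (((a : ℂ) * ((0 : ℝ) : ℂ) - Complex.I) ^ 2 - (R : ℂ) ^ 2 * ((0 : ℝ) : ℂ) ^ 2) ^ k)) := by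
      have h0 : Tendsto (fun ε : ℝ => ((ε⁻¹ : ℝ) : ℂ)) atTop (𝓝 ((0:ℝ):ℂ)) :=
        (Complex.continuous_ofReal.tendsto 0).comp tendsto_inv_atTop_zero
      exact ((limG μ hφ k).pow 2).mul
        (((((h0.const_mul _).sub_const _).pow 2).sub ((h0.pow 2).const_mul _)).pow k)
    have h2 : ((Complex.I ^ k * (M : ℂ)) ^ 2 *
        (((a : ℂ) * ((0 : ℝ) : ℂ) - Complex.I) ^ 2 - (R : ℂ) ^ 2 * ((0 : ℝ) : ℂ) ^ 2) ^ k)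
        = (M : ℂ) ^ 2 := by
      have : (Complex.I ^ k) ^ 2 * (Complex.I ^ 2) ^ k = 1 := by
        rw [← pow_mul, ← pow_mul, mul_comm k 2, ← pow_add, ← two_mul, ← mul_assoc, pow_mul]
        norm_num
      simp only [Complex.ofReal_zero, mul_zero, zero_sub, neg_sq, zero_pow two_ne_zero, sub_zero]
      linear_combination (M : ℂ) ^ 2 * this
    rw [h2] at h1
    refine h1.congr' ?_
    filter_upwards [eventually_gt_atTop 0] with x hx
    have hx' : (x : ℂ) ≠ 0 := by exact_mod_cast hx.ne'
    simp only [hP]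
    rw [mul_pow, ← pow_mul, mul_comm k 2, pow_mul, mul_right_comm, ← mul_pow, mul_comm]
    congr 2
    simp only [hz]
    push_cast
    field_simp
  have hPc : ∀ ε : ℝ, 0 < ε → P ε = (M : ℂ) ^ 2 := by
    intro ε hε
    have hc : ∀ x : ℝ, ε ≤ x → P x = P ε := by
      intro x hx
      refine (convex_Ici ε).is_const_of_fderivWithin_eq_zero (𝕜 := ℝ) (f := P) ?_ ?_ hx
        (Set.self_mem_Ici) 
      · intro y hy
        exact (hPd y (hε.trans_le hy)).differentiableAt.differentiableWithinAt
      · intro y hy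
        have h1 := (hPd y (hε.trans_le hy)).hasFDerivAt.hasFDerivWithinAt (s := Set.Ici ε)
        rw [h1.fderivWithin (uniqueDiffOn_Ici ε y hy)]
        ext; simp
    refine tendsto_nhds_unique (tendsto_const_nhds.congr' ?_) hPlim
    filter_upwards [eventually_ge_atTop ε] with x hx using (hc x hx).symm
  have hne : (a : ℂ) ^ 2 - (R : ℂ) ^ 2 ≠ 0 := by
    have : a ^ 2 - R ^ 2 ≠ 0 := by linarith
    exact_mod_cast this
  have hz0 : Tendsto z (𝓝[>] 0) (𝓝 (a : ℂ)) := by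
    have : Continuous z := by fun_prop
    have := (this.tendsto 0).mono_left (nhdsWithin_le_nhds (s := Set.Ioi 0))
    simpa [hz] using this
  have hden : Tendsto (fun ε => z ε ^ 2 - (R : ℂ) ^ 2) (𝓝[>] 0) (𝓝 ((a : ℂ) ^ 2 - (R : ℂ) ^ 2)) :=
    (hz0.pow 2).sub_const _
  refine re_tendsto (c := a ^ 2 * M ^ 2 / (R ^ 2 - a ^ 2) ^ (k + 2)) ?_ ?_
  · have : 0 < R ^ 2 - a ^ 2 := by linarith
    positivity
  · have h1 : Tendsto (fun ε => (-1 : ℂ) ^ (k + 1) * (z ε ^ 2 * (M : ℂ) ^ 2 /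
        (z ε ^ 2 - (R : ℂ) ^ 2) ^ (k + 2))) (𝓝[>] 0)
        (𝓝 ((-1 : ℂ) ^ (k + 1) * ((a : ℂ) ^ 2 * (M : ℂ) ^ 2 /
        ((a : ℂ) ^ 2 - (R : ℂ) ^ 2) ^ (k + 2)))) :=
      ((((hz0.pow 2).mul_const _).div (hden.pow _) (pow_ne_zero _ hne))).const_mul _
    convert h1.congr' ?_ using 2
    · push_cast
      rw [← neg_sub ((a : ℂ) ^ 2), neg_pow ((a : ℂ) ^ 2 - (R : ℂ) ^ 2) (k + 2)]
      have h5 : ((-1 : ℂ)) ^ (k + 2) = - (-1) ^ (k + 1) := by ring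
      have h6 : ((-1 : ℂ)) ^ (k + 1) * (-1) ^ (k + 1) = 1 := by
        rw [← mul_pow]; norm_num
      have h7 : ((-1 : ℂ)) ^ (k + 1) ≠ 0 := by simp
      rw [h5]
      field_simp
      linear_combination (-(a:ℂ) ^ 2 * M ^ 2) * h6
    · filter_upwards [self_mem_nhdsWithin, hden.eventually_ne hne] with ε hε hε2
      have H' : z ε * G ε = (z ε ^ 2 - (R : ℂ) ^ 2) * F ε := H ε hε
      have hp : G ε ^ 2 * (z ε ^ 2 - (R : ℂ) ^ 2) ^ k = (M : ℂ) ^ 2 := hPc ε hε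
      change _ = (Complex.I ^ (k + 1) * F ε) ^ 2
      rw [mul_pow, ← pow_mul, mul_comm (k + 1) 2, pow_mul, Complex.I_sq]
      congr 1
      rw [div_eq_iff (pow_ne_zero _ hε2), ← hp, pow_add]
      linear_combination ((z ε ^ 2 - (R : ℂ) ^ 2) ^ k) *
        (z ε * G ε + (z ε ^ 2 - (R : ℂ) ^ 2) * F ε) * H'

lemma lemC {α : Type*} [MeasurableSpace α] (μ : Measure α) [IsFiniteMeasure μ]
    {s u : α → ℝ} (hs : Measurable s) (hu : Measurable u) (hs1 : ∀ᵐ σ ∂μ, |s σ| ≤ 1)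
    (hu1 : ∀ᵐ σ ∂μ, |u σ| ≤ 1) (k : ℕ) (a B ε : ℝ) (hε : 0 < ε) (C : ℂ)
    (hinv : ∀ θ : ℝ, ∫ σ, (((a + B * (s σ * Real.cos θ + u σ * Real.sin θ) : ℝ) : ℂ)
      - ε * Complex.I)⁻¹ ^ k * ((s σ * Real.sin θ - u σ * Real.cos θ : ℝ) : ℂ) ∂μ = C) :
    ∫ σ, ((k * B * (u σ) ^ 2 : ℝ) : ℂ) * (((a + B * s σ : ℝ) : ℂ) - ε * Complex.I)⁻¹ ^ (k + 1)
      + (s σ : ℂ) * (((a + B * s σ : ℝ) : ℂ) - ε * Complex.I)⁻¹ ^ k ∂μ = 0 := by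
  set p : ℝ → α → ℝ := fun θ σ => s σ * Real.cos θ + u σ * Real.sin θ with hp
  set q : ℝ → α → ℝ := fun θ σ => s σ * Real.sin θ - u σ * Real.cos θ with hq
  have hpm : ∀ θ, Measurable (p θ) := fun θ => by fun_prop
  have hqm : ∀ θ, Measurable (q θ) := fun θ => by fun_prop
  have hpb : ∀ θ σ, |s σ| ≤ 1 → |u σ| ≤ 1 → |p θ σ| ≤ 2 := by
    intro θ σ h1 h2
    have h3 := Real.abs_cos_le_one θ
    have h4 := Real.abs_sin_le_one θ
    calc |p θ σ| ≤ |s σ * Real.cos θ| + |u σ * Real.sin θ| := abs_add_le _ _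
      _ ≤ 1 * 1 + 1 * 1 := by rw [abs_mul, abs_mul]; gcongr
      _ = 2 := by norm_num
  have hqb : ∀ θ σ, |s σ| ≤ 1 → |u σ| ≤ 1 → |q θ σ| ≤ 2 := by
    intro θ σ h1 h2
    have h3 := Real.abs_cos_le_one θ
    have h4 := Real.abs_sin_le_one θ
    calc |q θ σ| ≤ |s σ * Real.sin θ| + |u σ * Real.cos θ| := abs_sub _ _
      _ ≤ 1 * 1 + 1 * 1 := by rw [abs_mul, abs_mul]; gcongr
      _ = 2 := by norm_num
  have hm : ∀ θ (j : ℕ), Measurable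
      (fun σ => (((a + B * p θ σ : ℝ) : ℂ) - ε * Complex.I)⁻¹ ^ j) := fun θ j =>
    aux_meas (φ := fun σ => a + B * p θ σ) (((hpm θ).const_mul B).const_add a) _ j
  have hqm' : ∀ θ, Measurable (fun σ => (q θ σ : ℂ)) := fun θ =>
    Complex.measurable_ofReal.comp (hqm θ)
  have key := (hasDerivAt_integral_of_dominated_loc_of_deriv_le (μ := μ) (x₀ := (0 : ℝ))
    (F := fun (θ : ℝ) σ => (((a + B * p θ σ : ℝ) : ℂ) - ε * Complex.I)⁻¹ ^ k * (q θ σ : ℂ))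
    (F' := fun (θ : ℝ) σ => ((k * B * (q θ σ) ^ 2 : ℝ) : ℂ) *
        (((a + B * p θ σ : ℝ) : ℂ) - ε * Complex.I)⁻¹ ^ (k + 1)
      + (p θ σ : ℂ) * (((a + B * p θ σ : ℝ) : ℂ) - ε * Complex.I)⁻¹ ^ k)
    (bound := fun _ => (k * |B| * 2 ^ 2) * ε⁻¹ ^ (k + 1) + 2 * ε⁻¹ ^ k) (s := Set.univ)
    Filter.univ_mem ?_ ?_ ?_ ?_ ?_ ?_).2
  · have h0 : HasDerivAt (fun _ : ℝ => C) 0 (0 : ℝ) := hasDerivAt_const _ _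
    have h1 := key.unique (h0.congr_of_eventuallyEq (Eventually.of_forall fun θ => hinv θ))
    simpa [hp, hq] using h1
  · exact Eventually.of_forall fun θ => ((hm θ k).mul (hqm' θ)).aestronglyMeasurable
  · refine Integrable.of_bound ((hm 0 k).mul (hqm' 0)).aestronglyMeasurable (ε⁻¹ ^ k * 2) ?_
    filter_upwards [hs1, hu1] with σ h1 h2
    rw [norm_mul, Complex.norm_real]
    exact mul_le_mul (aux_inv _ _ _ hε le_rfl k) (hqb 0 σ h1 h2) (norm_nonneg _) (by positivity)
  · refine Measurable.aestronglyMeasurable ?_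
    refine Measurable.add (Measurable.mul ?_ (hm 0 (k + 1))) (Measurable.mul ?_ (hm 0 k))
    · exact Complex.measurable_ofReal.comp (((hqm 0).pow_const 2).const_mul _)
    · exact Complex.measurable_ofReal.comp (hpm 0)
  · filter_upwards [hs1, hu1] with σ h1 h2 θ _
    refine (norm_add_le _ _).trans ?_
    rw [norm_mul, norm_mul, Complex.norm_real, Complex.norm_real]
    have h3 := aux_inv (a + B * p θ σ) ε ε hε le_rfl k
    have h4 := aux_inv (a + B * p θ σ) ε ε hε le_rfl (k + 1)
    have h5 := hqb θ σ h1 h2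
    have h6 := hpb θ σ h1 h2
    have h7 : ‖(k * B * (q θ σ) ^ 2 : ℝ)‖ ≤ k * |B| * 2 ^ 2 := by
      rw [Real.norm_eq_abs, abs_mul, abs_mul, abs_pow, Nat.abs_cast]
      gcongr
    gcongr
    exact h6
  · exact integrable_const _
  · refine Eventually.of_forall fun σ θ _ => ?_
    have hpd : HasDerivAt (fun θ => p θ σ) (-(q θ σ)) θ := by
      refine (((Real.hasDerivAt_cos θ).const_mul (s σ)).add
        ((Real.hasDerivAt_sin θ).const_mul (u σ))).congr_deriv ?_
      simp only [hq]; ring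
    have hqd : HasDerivAt (fun θ => q θ σ) (p θ σ) θ := by
      refine (((Real.hasDerivAt_sin θ).const_mul (s σ)).sub
        ((Real.hasDerivAt_cos θ).const_mul (u σ))).congr_deriv ?_
      simp only [hp]; ring
    have h1 : HasDerivAt (fun θ => ((a + B * p θ σ : ℝ) : ℂ) - ε * Complex.I)
        ((B * (-(q θ σ)) : ℝ) : ℂ) θ :=
      (((hpd.const_mul B).const_add a).ofReal_comp).sub_const _
    have h0 := aux_ne (a + B * p θ σ) ε hε
    have h2 : HasDerivAt (fun θ => (((a + B * p θ σ : ℝ) : ℂ) - ε * Complex.I)⁻¹ ^ k * (q θ σ : ℂ))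
      _ θ := (((h1.inv h0).pow k)).mul hqd.ofReal_comp
    refine h2.congr_deriv ?_
    change k * (((a + B * p θ σ : ℝ) : ℂ) - ε * Complex.I)⁻¹ ^ (k - 1) *
      (-((B * (-(q θ σ)) : ℝ) : ℂ) / (((a + B * p θ σ : ℝ) : ℂ) - ε * Complex.I) ^ 2) * (q θ σ : ℂ)
      + (((a + B * p θ σ : ℝ) : ℂ) - ε * Complex.I)⁻¹ ^ k * (p θ σ : ℂ) = _
    generalize (((a + B * p θ σ : ℝ) : ℂ) - ε * Complex.I) = w at h0
    push_cast
    rcases k with _ | k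
    · simp
    · simp only [Nat.add_sub_cancel]
      simp only [div_eq_mul_inv, ← inv_pow]
      push_cast
      ring

lemma refl_exists {V : Type*} [NormedAddCommGroup V] [InnerProductSpace ℝ V] [FiniteDimensional ℝ V]
    (h : V) (hh : ‖h‖ = 1) : ∃ T : V ≃ₗᵢ[ℝ] V, ∀ σ, T σ = σ - (2 * ⟪h, σ⟫_ℝ) • h := by
  refine ⟨(ℝ ∙ h)ᗮ.reflection, fun σ => ?_⟩
  rw [Submodule.reflection_orthogonal_apply, Submodule.reflection_singleton_apply, hh]
  simp [mul_smul, two_smul]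

lemma refl_inv {N : ℕ} (d : ℝ) (y h : EuclideanSpace ℝ (Fin N)) (hh : ‖h‖ = 1)
    (hy : ⟪y, h⟫_ℝ = 0) (f : EuclideanSpace ℝ (Fin N) → ℂ) :
    ∫ σ, f (σ - (2 * ⟪h, σ⟫_ℝ) • h) ∂((Measure.hausdorffMeasure d).restrict
      {σ : EuclideanSpace ℝ (Fin N) | ‖σ‖ = 1 ∧ ⟪y, σ⟫_ℝ = 1}) =
    ∫ σ, f σ ∂((Measure.hausdorffMeasure d).restrict
      {σ : EuclideanSpace ℝ (Fin N) | ‖σ‖ = 1 ∧ ⟪y, σ⟫_ℝ = 1}) := by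
  obtain ⟨T, hT⟩ := refl_exists h hh
  have hpre : T ⁻¹' {σ : EuclideanSpace ℝ (Fin N) | ‖σ‖ = 1 ∧ ⟪y, σ⟫_ℝ = 1} =
      {σ : EuclideanSpace ℝ (Fin N) | ‖σ‖ = 1 ∧ ⟪y, σ⟫_ℝ = 1} := by
    ext σ
    simp only [Set.mem_preimage, Set.mem_ofPred_eq, LinearIsometryEquiv.norm_map]
    rw [hT, inner_sub_right, inner_smul_right, hy]
    simp
  have hemb : MeasurableEmbedding T := T.toHomeomorph.measurableEmbedding
  have hmp : MeasurePreserving T (Measure.hausdorffMeasure d) (Measure.hausdorffMeasure d) :=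
    T.toIsometryEquiv.measurePreserving_hausdorffMeasure d
  have := hmp.restrict_preimage_emb hemb
    {σ : EuclideanSpace ℝ (Fin N) | ‖σ‖ = 1 ∧ ⟪y, σ⟫_ℝ = 1}
  rw [hpre] at this
  rw [← this.integral_comp hemb f]
  simp only [hT]

lemma measSet {N : ℕ} (y : EuclideanSpace ℝ (Fin N)) :
    MeasurableSet {σ : EuclideanSpace ℝ (Fin N) | ‖σ‖ = 1 ∧ ⟪y, σ⟫_ℝ = 1} := by
  apply IsClosed.measurableSet
  exact (isClosed_eq continuous_norm continuous_const).inter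
    (isClosed_eq (by fun_prop) continuous_const)

lemma lemD {k : ℕ} (d : ℝ) (y : EuclideanSpace ℝ (Fin (k + 2)))
    (b : OrthonormalBasis (Fin (k + 2)) ℝ (EuclideanSpace ℝ (Fin (k + 2))))
    (Y : ℝ) (hY : 1 < Y) (hyb : y = Y • b 0) (ν : Measure (EuclideanSpace ℝ (Fin (k + 2))))
    [IsFiniteMeasure ν]
    (hν : ν = (Measure.hausdorffMeasure d).restrict
      {σ : EuclideanSpace ℝ (Fin (k + 2)) | ‖σ‖ = 1 ∧ ⟪y, σ⟫_ℝ = 1})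
    (a B ε : ℝ) (hε : 0 < ε) :
    ∫ σ, ((B * (1 - 1 / Y ^ 2 - ⟪b 1, σ⟫_ℝ ^ 2) : ℝ) : ℂ) *
        (((a + B * ⟪b 1, σ⟫_ℝ : ℝ) : ℂ) - ε * Complex.I)⁻¹ ^ (k + 1)
      + (⟪b 1, σ⟫_ℝ : ℂ) * (((a + B * ⟪b 1, σ⟫_ℝ : ℝ) : ℂ) - ε * Complex.I)⁻¹ ^ k ∂ν = 0 := by
  have hmem : ∀ᵐ σ ∂ν, ‖σ‖ = 1 ∧ ⟪y, σ⟫_ℝ = 1 := by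
    rw [hν]; exact ae_restrict_mem (measSet y)
  have hb1 : ∀ i, ∀ᵐ σ ∂ν, |⟪b i, σ⟫_ℝ| ≤ 1 := by
    intro i
    filter_upwards [hmem] with σ hσ
    have := abs_real_inner_le_norm (b i) σ
    rwa [hσ.1, b.norm_eq_one, one_mul] at this
  have hbm : ∀ i, Measurable (fun σ => ⟪b i, σ⟫_ℝ) := fun i =>
    (Continuous.measurable (by fun_prop))
  have horth : ∀ i j, i ≠ j → ⟪b i, b j⟫_ℝ = 0 := fun i j hij => b.orthonormal.2 hij
  have hself : ∀ i, ⟪b i, b i⟫_ℝ = 1 := fun i => by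
    rw [real_inner_self_eq_norm_sq, b.norm_eq_one]; norm_num
  have hsum : ∀ᵐ σ ∂ν, ∑ j : Fin k, ⟪b j.succ.succ, σ⟫_ℝ ^ 2 = 1 - 1 / Y ^ 2 - ⟪b 1, σ⟫_ℝ ^ 2 := by
    filter_upwards [hmem] with σ hσ
    have h1 := b.sum_sq_inner_right σ
    rw [Fin.sum_univ_succ, Fin.sum_univ_succ, hσ.1] at h1
    have h2 := hσ.2
    rw [hyb, inner_smul_left] at h2
    simp only [conj_trivial] at h2
    have h3 : ⟪b 0, σ⟫_ℝ = 1 / Y := by field_simp; linarith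
    rw [h3] at h1
    simp only [Fin.succ_zero_eq_one] at h1
    rw [div_pow] at h1
    linarith
  rcases Nat.eq_zero_or_pos k with rfl | hk
  · have h0 : ∫ σ, (⟪b 1, σ⟫_ℝ : ℂ) ∂ν = 0 := by
      have h1 := refl_inv d y (b 1) (b.norm_eq_one 1)
        (by rw [hyb, inner_smul_left, horth 0 1 (by simp), mul_zero])
        (fun σ => (⟪b 1, σ⟫_ℝ : ℂ))
      rw [← hν] at h1
      have h2 : ∀ σ, ((⟪b 1, σ - (2 * ⟪b 1, σ⟫_ℝ) • b 1⟫_ℝ : ℝ) : ℂ) = - (⟪b 1, σ⟫_ℝ : ℂ) := by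
        intro σ
        rw [inner_sub_right, inner_smul_right, hself]
        push_cast; ring
      simp only [h2, integral_neg] at h1
      linear_combination (-1/2 : ℂ) * h1
    rw [← h0]
    refine integral_congr_ae ?_
    filter_upwards [hsum] with σ hσ
    rw [← hσ]
    simp
  · have hC : ∀ j : Fin k, ∫ σ, ((k * B * (⟪b j.succ.succ, σ⟫_ℝ) ^ 2 : ℝ) : ℂ) *
        (((a + B * ⟪b 1, σ⟫_ℝ : ℝ) : ℂ) - ε * Complex.I)⁻¹ ^ (k + 1)
        + (⟪b 1, σ⟫_ℝ : ℂ) * (((a + B * ⟪b 1, σ⟫_ℝ : ℝ) : ℂ) - ε * Complex.I)⁻¹ ^ k ∂ν = 0 := by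
      intro j
      refine lemC ν (hbm 1) (hbm _) (hb1 1) (hb1 _) k a B ε hε
        (∫ σ, (((a + B * ⟪b 1, σ⟫_ℝ : ℝ) : ℂ) - ε * Complex.I)⁻¹ ^ k *
          (⟪b j.succ.succ, σ⟫_ℝ : ℂ) ∂ν) ?_
      intro θ
      have h10 : (1 : Fin (k + 2)) ≠ j.succ.succ := by
        rw [← Fin.succ_zero_eq_one]
        intro h
        exact (Fin.succ_ne_zero j) (Fin.succ_injective _ h).symm
      set c := Real.cos (θ / 2) with hc
      set s := Real.sin (θ / 2) with hs
      have hcs : s ^ 2 + c ^ 2 = 1 := Real.sin_sq_add_cos_sq _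
      have hcos : Real.cos θ = 1 - 2 * s ^ 2 := by
        have := Real.cos_two_mul (θ / 2)
        rw [mul_div_cancel₀ _ two_ne_zero] at this
        rw [this]; linarith
      have hsin : Real.sin θ = 2 * s * c := by
        have := Real.sin_two_mul (θ / 2)
        rwa [mul_div_cancel₀ _ two_ne_zero] at this
      set g := b j.succ.succ with hg
      have hgg : ⟪g, g⟫_ℝ = 1 := hself _
      have h1g : ⟪b 1, g⟫_ℝ = 0 := horth _ _ h10
      have hg1 : ⟪g, b 1⟫_ℝ = 0 := horth _ _ h10.symm
      have hh : ‖c • g - s • b 1‖ = 1 := by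
        have : ‖c • g - s • b 1‖ ^ 2 = 1 := by
          rw [← real_inner_self_eq_norm_sq]
          simp only [inner_sub_left, inner_sub_right, inner_smul_left, inner_smul_right, hgg, h1g,
            hg1, hself, conj_trivial]
          linarith
        rcases (sq_eq_sq_iff_eq_or_eq_neg.1 (this.trans (one_pow 2).symm)) with h | h
        · exact h
        · linarith [norm_nonneg (c • g - s • b 1)]
      have h1 := refl_inv d y (c • g - s • b 1) hh
        (by rw [hyb, inner_smul_left, inner_sub_right, inner_smul_right, inner_smul_right,
              horth 0 1 (by simp), horth 0 _ (Fin.succ_ne_zero _).symm]; simp)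
        (fun σ => (((a + B * ⟪b 1, σ⟫_ℝ : ℝ) : ℂ) - ε * Complex.I)⁻¹ ^ k * (⟪g, σ⟫_ℝ : ℂ))
      rw [← hν] at h1
      rw [← h1]
      congr 1
      ext σ
      have e1 : ⟪b 1, σ - (2 * ⟪c • g - s • b 1, σ⟫_ℝ) • (c • g - s • b 1)⟫_ℝ =
          ⟪b 1, σ⟫_ℝ * Real.cos θ + ⟪g, σ⟫_ℝ * Real.sin θ := by
        simp only [inner_sub_left, inner_sub_right, inner_smul_left, inner_smul_right, hgg, h1g,
            hg1, hself, conj_trivial, hcos, hsin]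
        ring
      have e2 : ⟪g, σ - (2 * ⟪c • g - s • b 1, σ⟫_ℝ) • (c • g - s • b 1)⟫_ℝ =
          ⟪b 1, σ⟫_ℝ * Real.sin θ - ⟪g, σ⟫_ℝ * Real.cos θ := by
        simp only [inner_sub_left, inner_sub_right, inner_smul_left, inner_smul_right, hgg, h1g,
            hg1, hself, conj_trivial, hcos, hsin]
        linear_combination (-2 * ⟪g, σ⟫_ℝ) * hcs
      rw [e1, e2]
    have hint : ∀ j : Fin k, Integrable (fun σ => ((k * B * (⟪b j.succ.succ, σ⟫_ℝ) ^ 2 : ℝ) : ℂ) *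
        (((a + B * ⟪b 1, σ⟫_ℝ : ℝ) : ℂ) - ε * Complex.I)⁻¹ ^ (k + 1)
        + (⟪b 1, σ⟫_ℝ : ℂ) * (((a + B * ⟪b 1, σ⟫_ℝ : ℝ) : ℂ) - ε * Complex.I)⁻¹ ^ k) ν := by
      intro j
      have hφ : Measurable (fun σ => a + B * ⟪b 1, σ⟫_ℝ) := ((hbm 1).const_mul B).const_add a
      refine Integrable.add ?_ ?_
      · refine (aux_integrable ν hφ ε hε (k + 1)).bdd_mul (c := k * |B| * 1 ^ 2) ?_ ?_
        · exact (Complex.measurable_ofReal.comp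
            (((hbm _).pow_const 2).const_mul _)).aestronglyMeasurable
        · filter_upwards [hb1 j.succ.succ] with σ hσ
          rw [Complex.norm_real, Real.norm_eq_abs, abs_mul, abs_mul, abs_pow, Nat.abs_cast]
          gcongr
      · refine (aux_integrable ν hφ ε hε k).bdd_mul (c := 1) ?_ ?_
        · exact (Complex.measurable_ofReal.comp (hbm _)).aestronglyMeasurable
        · filter_upwards [hb1 1] with σ hσ
          rwa [Complex.norm_real, Real.norm_eq_abs]
    have hS := integral_finsetSum (μ := ν) Finset.univ (fun j _ => hint j)
    rw [Finset.sum_eq_zero (fun j _ => hC j)] at hS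
    have hk0 : (k : ℂ) ≠ 0 := by exact_mod_cast hk.ne'
    refine mul_left_cancel₀ hk0 ?_
    rw [mul_zero, ← hS, ← integral_const_mul]
    refine integral_congr_ae ?_
    filter_upwards [hsum] with σ hσ
    rw [← hσ, Finset.sum_add_distrib, ← Finset.sum_mul, ← Complex.ofReal_sum, ← Finset.mul_sum]
    simp only [Finset.sum_const, Finset.card_univ, Fintype.card_fin, nsmul_eq_mul]
    push_cast
    ring

lemma lemE {k : ℕ} (d : ℝ) (y : EuclideanSpace ℝ (Fin (k + 2)))
    (b : OrthonormalBasis (Fin (k + 2)) ℝ (EuclideanSpace ℝ (Fin (k + 2))))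
    (Y : ℝ) (hY : 1 < Y) (hyb : y = Y • b 0) (ν : Measure (EuclideanSpace ℝ (Fin (k + 2))))
    [IsFiniteMeasure ν]
    (hν : ν = (Measure.hausdorffMeasure d).restrict
      {σ : EuclideanSpace ℝ (Fin (k + 2)) | ‖σ‖ = 1 ∧ ⟪y, σ⟫_ℝ = 1})
    (a B R : ℝ) (hR : R ^ 2 = B ^ 2 * (1 - 1 / Y ^ 2)) (haR : a ^ 2 < R ^ 2) :
    Tendsto (fun ε : ℝ => (Complex.I ^ (k + 1) *
      ∫ σ, (((a + B * ⟪b 1, σ⟫_ℝ : ℝ) : ℂ) - ε * Complex.I)⁻¹ ^ (k + 1) ∂ν).re) (𝓝[>] 0) (𝓝 0) := by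
  have hφ : Measurable (fun σ => a + B * ⟪b 1, σ⟫_ℝ) := Continuous.measurable (by fun_prop)
  refine lemA ν hφ k a R haR ?_
  intro ε hε
  have h1 := lemD d y b Y hY hyb ν hν a B ε hε
  rw [← sub_eq_zero, ← integral_const_mul, ← integral_const_mul, ← integral_sub
    ((aux_integrable ν hφ ε hε k).const_mul _) ((aux_integrable ν hφ ε hε (k + 1)).const_mul _)]
  rw [← mul_zero (B : ℂ), ← h1, ← integral_const_mul]
  congr 1
  ext σ
  have hw := aux_ne (a + B * ⟪b 1, σ⟫_ℝ) ε hε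
  have hR' : (R : ℂ) ^ 2 = (B : ℂ) ^ 2 * (1 - 1 / (Y : ℂ) ^ 2) := by exact_mod_cast hR
  rw [hR']
  have hk : (((a + B * ⟪b 1, σ⟫_ℝ : ℝ) : ℂ) - ε * Complex.I)⁻¹ ^ k =
    (((a + B * ⟪b 1, σ⟫_ℝ : ℝ) : ℂ) - ε * Complex.I)⁻¹ ^ (k + 1) *
      (((a + B * ⟪b 1, σ⟫_ℝ : ℝ) : ℂ) - ε * Complex.I) := by
    rw [pow_succ, mul_assoc, inv_mul_cancel₀ hw, mul_one]
  rw [hk]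
  generalize (((a + B * ⟪b 1, σ⟫_ℝ : ℝ) : ℂ) - ε * Complex.I)⁻¹ ^ (k + 1) = W
  push_cast
  ring

lemma exists_basis {k : ℕ} (y v : EuclideanSpace ℝ (Fin (k + 2))) (hy : y ≠ 0)
    (hv : ∀ c : ℝ, v ≠ c • y) :
    ∃ b : OrthonormalBasis (Fin (k + 2)) ℝ (EuclideanSpace ℝ (Fin (k + 2))),
      ∃ A B : ℝ, y = ‖y‖ • b 0 ∧ v = A • b 0 + B • b 1 := by
  have hyn : ‖y‖ ≠ 0 := norm_ne_zero_iff.2 hy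
  set b0 := ‖y‖⁻¹ • y with hb0
  have hb0n : ⟪b0, b0⟫_ℝ = 1 := by
    rw [hb0, inner_smul_left, inner_smul_right, real_inner_self_eq_norm_sq]
    simp only [conj_trivial]; field_simp
  set e := v - ⟪b0, v⟫_ℝ • b0 with he
  have he0 : e ≠ 0 := by
    intro h
    refine hv (⟪b0, v⟫_ℝ * ‖y‖⁻¹) ?_
    rw [mul_smul, ← hb0]
    exact sub_eq_zero.1 h
  have hen : ‖e‖ ≠ 0 := norm_ne_zero_iff.2 he0
  set b1 := ‖e‖⁻¹ • e with hb1
  have hb1n : ⟪b1, b1⟫_ℝ = 1 := by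
    rw [hb1, inner_smul_left, inner_smul_right, real_inner_self_eq_norm_sq]
    simp only [conj_trivial]; field_simp
  have h01 : ⟪b0, b1⟫_ℝ = 0 := by
    rw [hb1, inner_smul_right, he, inner_sub_right, inner_smul_right, hb0n]; simp
  have h10 : ⟪b1, b0⟫_ℝ = 0 := by rw [real_inner_comm, h01]
  obtain ⟨b, hb⟩ := Orthonormal.exists_orthonormalBasis_extension_of_card_eq (𝕜 := ℝ)
    (E := EuclideanSpace ℝ (Fin (k + 2))) (ι := Fin (k + 2)) (by simp)
    (v := fun i => if i = 0 then b0 else b1) (s := {0, 1}) (by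
      rw [orthonormal_iff_ite]
      rintro ⟨i, rfl | rfl⟩ ⟨j, rfl | rfl⟩ 
      · simpa [-real_inner_self_eq_norm_sq, -inner_self_eq_norm_sq_to_K] using hb0n
      · simpa [Subtype.ext_iff] using h01
      · simpa [Subtype.ext_iff] using h10
      · simpa [-real_inner_self_eq_norm_sq, -inner_self_eq_norm_sq_to_K] using hb1n)
  refine ⟨b, ⟪b0, v⟫_ℝ, ‖e‖, ?_, ?_⟩
  · rw [hb 0 (by simp)]
    simp [hb0, smul_smul, hyn]
  · rw [hb 0 (by simp), hb 1 (by simp)]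
    simp only [if_true, one_ne_zero, if_false]
    have h3 : ‖e‖ • b1 = e := by rw [hb1, smul_smul, mul_inv_cancel₀ hen, one_smul]
    rw [h3, he]
    abel

/-- Lemma 2 (condition (III)) for the spherical cam: if the line through
`x ≠ y` avoids the closed unit ball, then the real part of
`iⁿ ∫_{Z(y)} ‖y − σ‖⁻¹ (⟪x − y, σ⟫ − iε)^{−n} dμ(σ)` tends to `0` as
`ε → 0⁺`, where `μ` is the `(n−1)`-dimensional Hausdorff measure restricted to
`Z(y) = {σ : ‖σ‖ = 1, ⟪y, σ⟫ = 1}`. -/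
theorem re_Qn_tendsto_zero (n : ℕ) (hn : 1 ≤ n)
    (x y : EuclideanSpace ℝ (Fin (n + 1))) (hxy : x ≠ y)
    (hline : ∀ t : ℝ, y + t • (x - y) ∉
      Metric.closedBall (0 : EuclideanSpace ℝ (Fin (n + 1))) 1)
    (μ : Measure (EuclideanSpace ℝ (Fin (n + 1))))
    (hμ : μ = (MeasureTheory.Measure.hausdorffMeasure ((n : ℝ) - 1)).restrict
      {σ : EuclideanSpace ℝ (Fin (n + 1)) | ‖σ‖ = 1 ∧ ⟪y, σ⟫_ℝ = 1}) :
    Tendsto (fun ε : ℝ =>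
        (Complex.I ^ n *
          ∫ σ in {σ : EuclideanSpace ℝ (Fin (n + 1)) | ‖σ‖ = 1 ∧ ⟪y, σ⟫_ℝ = 1},
            ((‖y - σ‖⁻¹ : ℝ) : ℂ) *
              ((⟪x - y, σ⟫_ℝ : ℂ) - (ε : ℂ) * Complex.I) ^ (-(n : ℤ)) ∂μ).re)
      (𝓝[>] (0 : ℝ)) (𝓝 0) := by
  obtain ⟨k, rfl⟩ : ∃ k, n = k + 1 := ⟨n - 1, by omega⟩
  set v := x - y with hv
  have hv0 : v ≠ 0 := sub_ne_zero.2 hxy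
  have hline' : ∀ t : ℝ, 1 < ‖y + t • v‖ := fun t => by
    have := hline t
    rw [Metric.mem_closedBall, dist_zero_right, not_le] at this
    exact this
  have hY : 1 < ‖y‖ := by simpa using hline' 0
  have hy0 : y ≠ 0 := by rintro rfl; simp at hY; linarith
  have hvc : ∀ c : ℝ, v ≠ c • y := by
    intro c hc
    have hc0 : c ≠ 0 := by rintro rfl; exact hv0 (by simpa using hc)
    have := hline' (-c⁻¹)
    rw [hc, smul_smul, neg_mul, inv_mul_cancel₀ hc0] at this
    simp at this
    linarith
  obtain ⟨b, A, B, hyb, hvb⟩ := exists_basis y v hy0 hvc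
  set Y := ‖y‖ with hYdef
  have horth : ∀ i j, i ≠ j → ⟪b i, b j⟫_ℝ = 0 := fun i j hij => b.orthonormal.2 hij
  have hself : ∀ i, ⟪b i, b i⟫_ℝ = 1 := fun i => by
    rw [real_inner_self_eq_norm_sq, b.norm_eq_one]; norm_num
  have hq : ∀ t : ℝ, 1 < (Y + t * A) ^ 2 + (t * B) ^ 2 := by
    intro t
    have h1 := hline' t
    have h2 : ‖y + t • v‖ ^ 2 = (Y + t * A) ^ 2 + (t * B) ^ 2 := by
      have : y + t • v = (Y + t * A) • b 0 + (t * B) • b 1 := by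
        rw [hvb]; nth_rewrite 1 [hyb]; module
      rw [this, ← real_inner_self_eq_norm_sq]
      simp only [inner_add_left, inner_add_right, inner_smul_left, inner_smul_right, hself,
        horth 0 1 (by simp), horth 1 0 (by simp), conj_trivial]
      ring
    rw [← h2]
    nlinarith
  have hAB : 0 < A ^ 2 + B ^ 2 := by
    rcases eq_or_ne A 0 with rfl | hA
    · rcases eq_or_ne B 0 with rfl | hB
      · simp at hvb; exact absurd hvb hv0
      · positivity
    · positivity
  have hAB2 : A ^ 2 + B ^ 2 < Y ^ 2 * B ^ 2 := by
    have h1 := hq (-(Y * A) / (A ^ 2 + B ^ 2))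
    have h2 : (Y + -(Y * A) / (A ^ 2 + B ^ 2) * A) ^ 2 + (-(Y * A) / (A ^ 2 + B ^ 2) * B) ^ 2
      = Y ^ 2 * B ^ 2 / (A ^ 2 + B ^ 2) := by
      field_simp
      ring
    rw [h2, lt_div_iff₀ hAB] at h1
    linarith
  have hYpos : 0 < Y := by linarith
  have hrho : 0 ≤ 1 - 1 / Y ^ 2 := by
    rw [sub_nonneg, div_le_one (by positivity)]; nlinarith
  have hR : (B * √(1 - 1 / Y ^ 2)) ^ 2 = B ^ 2 * (1 - 1 / Y ^ 2) := by
    rw [mul_pow, Real.sq_sqrt hrho]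
  have haR : (A / Y) ^ 2 < (B * √(1 - 1 / Y ^ 2)) ^ 2 := by
    rw [hR, div_pow, div_lt_iff₀ (by positivity)]
    have : B ^ 2 * (1 - 1 / Y ^ 2) * Y ^ 2 = Y ^ 2 * B ^ 2 - B ^ 2 := by field_simp
    rw [this]; linarith
  set S := {σ : EuclideanSpace ℝ (Fin (k + 1 + 1)) | ‖σ‖ = 1 ∧ ⟪y, σ⟫_ℝ = 1} with hS
  have hμS : μ.restrict S = μ := by
    rw [hμ, Measure.restrict_restrict (measSet y), Set.inter_self]
  rw [hμS]
  have hmem : ∀ᵐ σ ∂μ, ‖σ‖ = 1 ∧ ⟪y, σ⟫_ℝ = 1 := by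
    rw [hμ]; exact ae_restrict_mem (measSet y)
  have hcongr : ∀ ε : ℝ, (fun σ => ((‖y - σ‖⁻¹ : ℝ) : ℂ) *
      ((⟪v, σ⟫_ℝ : ℂ) - (ε : ℂ) * Complex.I) ^ (-((k + 1 : ℕ) : ℤ))) =ᵐ[μ]
      fun σ => (((√(Y ^ 2 - 1))⁻¹ : ℝ) : ℂ) *
        (((A / Y + B * ⟪b 1, σ⟫_ℝ : ℝ) : ℂ) - ε * Complex.I)⁻¹ ^ (k + 1) := by
    intro ε
    filter_upwards [hmem] with σ hσ
    have h2 := hσ.2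
    rw [hyb, inner_smul_left] at h2
    simp only [conj_trivial] at h2
    have h3 : ⟪b 0, σ⟫_ℝ = 1 / Y := by field_simp; linarith
    have h4 : ⟪v, σ⟫_ℝ = A / Y + B * ⟪b 1, σ⟫_ℝ := by
      rw [hvb, inner_add_left, inner_smul_left, inner_smul_left, h3]
      simp only [conj_trivial]; ring
    have h5 : ‖y - σ‖ = √(Y ^ 2 - 1) := by
      rw [eq_comm, Real.sqrt_eq_iff_mul_self_eq (by nlinarith) (norm_nonneg _), ← pow_two,
        norm_sub_sq_real, hσ.1, hσ.2]
      ring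
    rw [h4, h5, zpow_neg, zpow_natCast, inv_pow]
  simp only [fun ε : ℝ => integral_congr_ae (hcongr ε), integral_const_mul]
  by_cases hfin : IsFiniteMeasure μ
  · have h1 := (lemE (((k + 1 : ℕ) : ℝ) - 1) y b Y hY hyb μ hμ (A / Y) B _ hR haR).const_mul
      ((√(Y ^ 2 - 1))⁻¹)
    rw [mul_zero] at h1
    refine h1.congr fun ε => ?_
    rw [← Complex.re_ofReal_mul]
    congr 1
    ring
  · refine tendsto_const_nhds.congr' ?_
    filter_upwards [self_mem_nhdsWithin] with ε hε
    have hε : 0 < ε := hε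
    rw [integral_undef, mul_zero, mul_zero, Complex.zero_re]
    intro hi
    apply hfin
    set K : ℝ := |A / Y| + |B| + ε with hK
    have hKpos : 0 < K := by positivity
    have hc : Integrable (fun _ : EuclideanSpace ℝ (Fin (k + 1 + 1)) => K⁻¹ ^ (k + 1)) μ := by
      refine hi.mono aestronglyMeasurable_const ?_
      filter_upwards [hmem] with σ hσ
      have h1 := abs_real_inner_le_norm (b 1) σ
      rw [hσ.1, b.norm_eq_one, one_mul] at h1
      rw [Real.norm_of_nonneg (by positivity), norm_pow, norm_inv]
      have h3 := norm_pos_iff.2 (aux_ne (A / Y + B * ⟪b 1, σ⟫_ℝ) ε hε)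
      have h2 : ‖((A / Y + B * ⟪b 1, σ⟫_ℝ : ℝ) : ℂ) - ε * Complex.I‖ ≤ K := by
        refine (norm_sub_le _ _).trans ?_
        rw [Complex.norm_real, norm_mul, Complex.norm_I, Complex.norm_real, Real.norm_of_nonneg hε.le,
          mul_one, Real.norm_eq_abs]
        have : |A / Y + B * ⟪b 1, σ⟫_ℝ| ≤ |A / Y| + |B| * 1 := by
          refine (abs_add_le _ _).trans ?_
          rw [abs_mul]
          gcongr
        linarith
      gcongr
    rw [integrable_const_iff] at hc
    rcases hc with hc | hc
    · exact absurd hc (by positivity)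
    · exact hc
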